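/- There exists a Reeb graph (G, h), a natural number k, and a drawing Γ of (G, h) such that: every vertex v has y-coordinate h(v) in Γ, every edge of Γ is an xy-monotone curve, Γ has exactly k crossings, and every drawing of (G, h) in which all edges are straight line segments has strictly more than k crossings. -/

import Mathlib

open Set

/-- A drawing of a Reeb graph `(G, h)`: every vertex `v` is placed at the point
`(x v, h v)` in the plane (distinct vertices at distinct points), and every edge
`{v, w}` of `G` is drawn as the graph of a continuous function of the `y`-coordinate
over the height interval of its two endpoints; such a curve is a continuous
`y`-monotone curve joining the images of the endpoints (it meets every horizontal
line in at most one point). -/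
structure ReebDrawing {V : Type*} (G : SimpleGraph V) (h : V → ℝ) where
  /-- the `x`-coordinate of each vertex -/
  x : V → ℝ
  /-- distinct vertices are mapped to distinct points -/
  inj : Function.Injective fun v => ((x v, h v) : ℝ × ℝ)
  /-- for each edge, the `x`-coordinate of its curve as a function of the height `y` -/
  curve : Sym2 V → ℝ → ℝ
  curve_cont : ∀ e ∈ G.edgeSet, Continuous (curve e)
  curve_end : ∀ v w : V, G.Adj v w → curve s(v, w) (h v) = x v

namespace ReebDrawing

variable {V : Type*} {G : SimpleGraph V} {h : V → ℝ}

/-- The point of the plane where the vertex `v` is drawn. -/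
def pos (D : ReebDrawing G h) (v : V) : ℝ × ℝ := (D.x v, h v)

/-- The set of points of the curve drawn for the edge `{v, w}`. -/
def edgeCurve (D : ReebDrawing G h) (v w : V) : Set (ℝ × ℝ) :=
  {p | p.2 ∈ Set.uIcc (h v) (h w) ∧ p.1 = D.curve s(v, w) p.2}

/-- `p` is a crossing point of the two distinct edges `{v, w}` and `{v', w'}`:
it lies on both curves and is not the image of a shared endpoint. -/
def IsCrossing (D : ReebDrawing G h) (p : ℝ × ℝ) (v w v' w' : V) : Prop :=
  G.Adj v w ∧ G.Adj v' w' ∧ s(v, w) ≠ s(v', w') ∧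
    p ∈ D.edgeCurve v w ∧ p ∈ D.edgeCurve v' w' ∧
    ∀ u : V, (u = v ∨ u = w) → (u = v' ∨ u = w') → p ≠ D.pos u

/-- The set of crossings of a drawing: an unordered pair of (distinct) edges together
with a crossing point of these two edges. -/
def crossingSet (D : ReebDrawing G h) : Set (Sym2 (Sym2 V) × (ℝ × ℝ)) :=
  {q | ∃ v w v' w', q.1 = s(s(v, w), s(v', w')) ∧ D.IsCrossing q.2 v w v' w'}

/-- The number of crossings of a drawing, counted over all pairs of edges. -/
noncomputable def numCrossings (D : ReebDrawing G h) : ℕ∞ := D.crossingSet.encard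

/-- The crossings involving the fixed edge `e₀`: the other edge together with the
crossing point. -/
def edgeCrossings (D : ReebDrawing G h) (e₀ : Sym2 V) : Set (Sym2 V × (ℝ × ℝ)) :=
  {q | ∃ v w v' w', s(v, w) = e₀ ∧ q.1 = s(v', w') ∧ D.IsCrossing q.2 v w v' w'}

/-- The edge `{v, w}` is drawn as a straight line segment. -/
def Straight (D : ReebDrawing G h) (v w : V) : Prop :=
  ∀ y ∈ Set.uIcc (h v) (h w),
    D.curve s(v, w) y = D.x v + (y - h v) * (D.x w - D.x v) / (h w - h v)

/-- The edge `{v, w}` is drawn as an `xy`-monotone curve: besides meeting every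
horizontal line at most once (which holds by construction), it meets every vertical
line at most once. -/
def XYMonotone (D : ReebDrawing G h) (v w : V) : Prop :=
  Set.InjOn (D.curve s(v, w)) (Set.uIcc (h v) (h w))

/-- Edge `{v, w}` is (strictly) left of edge `{v', w'}`: at every height in the
interior of the common `y`-interval, the point of the first curve has strictly
smaller `x`-coordinate. -/
def LeftOf (D : ReebDrawing G h) (v w v' w' : V) : Prop :=
  ∀ y ∈ interior (Set.uIcc (h v) (h w) ∩ Set.uIcc (h v') (h w')),
    D.curve s(v, w) y < D.curve s(v', w') y

end ReebDrawing

/-- The Reeb graph crossing number: the minimum number of crossings over all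
drawings of `(G, h)`. -/
noncomputable def RGCN {V : Type*} (G : SimpleGraph V) (h : V → ℝ) : ℕ∞ :=
  ⨅ D : ReebDrawing G h, D.numCrossings

/-- The number of neighbours of `v` of strictly smaller height. -/
noncomputable def downDeg {V : Type*} (G : SimpleGraph V) (h : V → ℝ) (v : V) : ℕ :=
  {w | G.Adj v w ∧ h w < h v}.ncard

/-- The number of neighbours of `v` of strictly larger height. -/
noncomputable def upDeg {V : Type*} (G : SimpleGraph V) (h : V → ℝ) (v : V) : ℕ :=
  {w | G.Adj v w ∧ h v < h w}.ncard

/-- A generic Reeb graph: all vertex heights are distinct, every vertex has degree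
`1` or `3`, and every vertex has at most `2` lower and at most `2` higher neighbours. -/
def IsGenericReeb {V : Type*} (G : SimpleGraph V) (h : V → ℝ) : Prop :=
  Function.Injective h ∧
  (∀ v : V, (G.neighborSet v).ncard = 1 ∨ (G.neighborSet v).ncard = 3) ∧
  (∀ v : V, downDeg G h v ≤ 2 ∧ upDeg G h v ≤ 2)

/-- A subdivided Reeb graph: every edge joins vertices at consecutive levels (distinct
heights with no vertex height strictly in between), every vertex has degree at most `3`,
with at most `2` lower and at most `2` higher neighbours. -/
def IsSubdividedReeb {V : Type*} (G : SimpleGraph V) (h : V → ℝ) : Prop :=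
  (∀ v w : V, G.Adj v w → h v ≠ h w ∧
    ∀ u : V, h u ∉ Set.Ioo (min (h v) (h w)) (max (h v) (h w))) ∧
  (∀ v : V, (G.neighborSet v).ncard ≤ 3 ∧ downDeg G h v ≤ 2 ∧ upDeg G h v ≤ 2)

/-- `G` is the cycle graph on the enumeration `e` of its vertex set: adjacency holds
exactly between cyclically consecutive vertices. -/
def IsCycleEnum {V : Type*} {n : ℕ} (G : SimpleGraph V) (e : Fin n ≃ V) : Prop :=
  ∀ i j : Fin n, G.Adj (e i) (e j) ↔ ((i.val + 1) % n = j.val ∨ (j.val + 1) % n = i.val)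

/-- A caterpillar: a tree together with a central path (the spine) such that every
vertex is on the spine or adjacent to a spine vertex. -/
def IsCaterpillar {V : Type*} (G : SimpleGraph V) : Prop :=
  G.IsTree ∧ ∃ (n : ℕ) (s : Fin n → V),
    Function.Injective s ∧
    (∀ (i : ℕ) (hi : i + 1 < n), G.Adj (s ⟨i, Nat.lt_of_succ_lt hi⟩) (s ⟨i + 1, hi⟩)) ∧
    (∀ v : V, v ∈ Set.range s ∨ ∃ i : Fin n, G.Adj v (s i))

/-!
The graph consists of two fans, one upside down, each made of two long edges from an apex to two
corners, and of three two-edge spokes from each of the four corners to a common hub at height `0`.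
The long edges of each fan have their midpoints at the height of the corners of the other fan.

Suppose the long edges are straight. If at that height both edges of each fan passed strictly
outside the corners of the other fan, the corners of each fan would be more than twice as far apart
as those of the other, which is absurd. So some long edge passes a corner of the other fan on the
inside or through it. Along the three edge-disjoint walks from this corner over the hub to the
opposite corner of its own fan it changes sides, so it has at least three crossings.

If the long edges are bent outwards instead, they avoid all spokes, and the fans cross each other
only twice, at height `0`. A steep shear makes all these curves `xy`-monotone.
-/

/-! ### Crossings in arbitrary drawings -/

namespace ReebDrawing

variable {V : Type*} {G : SimpleGraph V} {h : V → ℝ} {D : ReebDrawing G h} {p : ℝ × ℝ}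
  {u v w v' w' : V}

theorem edgeCurve_comm (D : ReebDrawing G h) (v w : V) : D.edgeCurve v w = D.edgeCurve w v := by
  simp only [edgeCurve, uIcc_comm (h v), Sym2.eq_swap (a := v)]

theorem IsCrossing.symm (H : D.IsCrossing p v w v' w') : D.IsCrossing p v' w' v w :=
  let ⟨hvw, hvw', hne, hp, hp', hend⟩ := H
  ⟨hvw', hvw, hne.symm, hp', hp, fun u hu hu' => hend u hu' hu⟩

theorem IsCrossing.swap_left (H : D.IsCrossing p v w v' w') : D.IsCrossing p w v v' w' :=
  let ⟨hvw, hvw', hne, hp, hp', hend⟩ := H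
  ⟨hvw.symm, hvw', by rwa [Sym2.eq_swap], by rwa [edgeCurve_comm], hp',
    fun u hu => hend u hu.symm⟩

theorem IsCrossing.swap_right (H : D.IsCrossing p v w v' w') : D.IsCrossing p v w w' v' :=
  H.symm.swap_left.symm

theorem curve_height (D : ReebDrawing G h) (hvw : G.Adj v w) (hu : u ∈ s(v, w)) :
    D.curve s(v, w) (h u) = D.x u := by
  rcases Sym2.mem_iff.1 hu with rfl | rfl
  · exact D.curve_end u w hvw
  · rw [Sym2.eq_swap, D.curve_end u v hvw.symm]

theorem IsCrossing.snd_ne_height (H : D.IsCrossing p v w v' w') (hu : u ∈ s(v, w))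
    (hu' : u ∈ s(v', w')) : p.2 ≠ h u := by
  obtain ⟨hvw, -, -, ⟨-, hp⟩, -, hend⟩ := H
  intro hpu
  refine hend u (Sym2.mem_iff.1 hu) (Sym2.mem_iff.1 hu') (Prod.ext ?_ hpu)
  rw [hp, hpu, D.curve_height hvw hu, pos]

theorem exists_oriented_of_mem_crossingSet {r : V → V → Prop}
    {D : ReebDrawing (SimpleGraph.fromRel r) h} {q : Sym2 (Sym2 V) × (ℝ × ℝ)}
    (hq : q ∈ D.crossingSet) :
    ∃ v w v' w', r v w ∧ r v' w' ∧ q.1 = s(s(v, w), s(v', w')) ∧ D.IsCrossing q.2 v w v' w' := by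
  obtain ⟨v, w, v', w', hq, H⟩ := hq
  rcases H.1.2 with hr | hr <;> rcases H.2.1.2 with hr' | hr'
  · exact ⟨v, w, v', w', hr, hr', hq, H⟩
  · exact ⟨v, w, w', v', hr, hr', by rw [hq, Sym2.eq_swap (a := v')], H.swap_right⟩
  · exact ⟨w, v, v', w', hr, hr', by rw [hq, Sym2.eq_swap (a := v)], H.swap_left⟩
  · exact ⟨w, v, w', v', hr, hr', by rw [hq, Sym2.eq_swap (a := v), Sym2.eq_swap (a := v')],
      H.swap_left.swap_right⟩

theorem exists_isCrossing_of_sub_mul_sub_nonpos (D : ReebDrawing G h) (hvw : G.Adj v w)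
    (hvw' : G.Adj v' w') (hdisj : ∀ u ∈ s(v', w'), u ∉ s(v, w)) {y z : ℝ}
    (hy : y ∈ uIcc (h v) (h w)) (hz : z ∈ uIcc (h v) (h w))
    (hy' : y ∈ uIcc (h v') (h w')) (hz' : z ∈ uIcc (h v') (h w'))
    (hyz : (D.curve s(v, w) y - D.curve s(v', w') y) *
      (D.curve s(v, w) z - D.curve s(v', w') z) ≤ 0) :
    ∃ p, D.IsCrossing p v w v' w' := by
  set f := fun t => D.curve s(v, w) t - D.curve s(v', w') t
  have hcont : Continuous f := (D.curve_cont _ hvw).sub (D.curve_cont _ hvw')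
  have hzero : (0 : ℝ) ∈ uIcc (f y) (f z) := by
    rcases mul_nonpos_iff.1 hyz with h0 | h0
    · exact mem_uIcc.2 (.inr h0.symm)
    · exact mem_uIcc.2 (.inl h0)
  obtain ⟨t, ht, hft⟩ := intermediate_value_uIcc hcont.continuousOn hzero
  refine ⟨(D.curve s(v, w) t, t), hvw, hvw', ?_, ⟨uIcc_subset_uIcc hy hz ht, rfl⟩,
    ⟨uIcc_subset_uIcc hy' hz' ht, sub_eq_zero.1 hft⟩, fun u hu hu' => ?_⟩
  · exact fun he => hdisj v' (Sym2.mem_mk_left v' w') (he ▸ Sym2.mem_mk_left v' w')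
  · exact absurd (Sym2.mem_iff.2 hu) (hdisj u (Sym2.mem_iff.2 hu'))

theorem exists_mem_crossingSet_of_walk (D : ReebDrawing G h) (hvw : G.Adj v w) {a b : V}
    (W : G.Walk a b) (hW : ∀ u ∈ W.support, h u ∈ uIcc (h v) (h w) ∧ u ∉ s(v, w)) {σ : ℝ}
    (ha : σ * (D.curve s(v, w) (h a) - D.x a) ≤ 0)
    (hb : 0 < σ * (D.curve s(v, w) (h b) - D.x b)) :
    ∃ e ∈ W.edges, ∃ p, (s(s(v, w), e), p) ∈ D.crossingSet := by
  induction W with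
  | nil => exact absurd ha hb.not_ge
  | @cons a c b hac W ih =>
    simp only [SimpleGraph.Walk.support_cons, List.mem_cons, forall_eq_or_imp] at hW
    obtain ⟨⟨ha_mem, ha_disj⟩, hW⟩ := hW
    obtain ⟨hc_mem, hc_disj⟩ := hW c W.start_mem_support
    by_cases hc : σ * (D.curve s(v, w) (h c) - D.x c) ≤ 0
    · obtain ⟨e, he, hcross⟩ := ih hW hc hb
      exact ⟨e, by simp [he], hcross⟩
    have hdisj : ∀ u ∈ s(a, c), u ∉ s(v, w) := fun u hu =>
      (Sym2.mem_iff.1 hu).elim (· ▸ ha_disj) (· ▸ hc_disj)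
    have hσ : 0 < σ * σ := mul_self_pos.2 (by rintro rfl; simp at hc)
    have hac_sign : (D.curve s(v, w) (h a) - D.x a) * (D.curve s(v, w) (h c) - D.x c) ≤ 0 := by
      refine nonpos_of_mul_nonpos_right ?_ hσ
      rw [← mul_mul_mul_comm]
      exact mul_nonpos_of_nonpos_of_nonneg ha (not_le.1 hc).le
    obtain ⟨p, hp⟩ := D.exists_isCrossing_of_sub_mul_sub_nonpos hvw hac hdisj ha_mem hc_mem
      left_mem_uIcc right_mem_uIcc (by
        rwa [D.curve_height hac (Sym2.mem_mk_left a c), D.curve_height hac (Sym2.mem_mk_right a c)])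
    exact ⟨s(a, c), by simp, p, v, w, a, c, rfl, hp⟩

theorem card_le_numCrossings_of_walks {ι : Type*} [Fintype ι] (D : ReebDrawing G h)
    (hvw : G.Adj v w) {a b : V} (W : ι → G.Walk a b)
    (hdisj : Pairwise fun k l => (W k).edges.Disjoint (W l).edges)
    (hW : ∀ k, ∀ u ∈ (W k).support, h u ∈ uIcc (h v) (h w) ∧ u ∉ s(v, w)) {σ : ℝ}
    (ha : σ * (D.curve s(v, w) (h a) - D.x a) ≤ 0)
    (hb : 0 < σ * (D.curve s(v, w) (h b) - D.x b)) :
    (Fintype.card ι : ℕ∞) ≤ D.numCrossings := by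
  choose e he p hp using fun k => D.exists_mem_crossingSet_of_walk hvw (W k) (hW k) ha hb
  have hinj : Function.Injective fun k => (s(s(v, w), e k), p k) := by
    intro k l hkl
    have hekl : e k = e l := Sym2.congr_right.1 (congrArg Prod.fst hkl)
    by_contra hne
    exact hdisj hne (he k) (hekl ▸ he l)
  calc (Fintype.card ι : ℕ∞) = (range fun k => (s(s(v, w), e k), p k)).encard := by
        rw [← image_univ, hinj.encard_image, encard_univ, ENat.card_eq_coe_fintype_card]
    _ ≤ D.numCrossings := encard_le_encard (range_subset_iff.2 hp)

theorem Straight.curve_midpoint (H : D.Straight v w) (hvw : h v ≠ h w) :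
    D.curve s(v, w) ((h v + h w) / 2) = (D.x v + D.x w) / 2 := by
  have hmem : (h v + h w) / 2 ∈ uIcc (h v) (h w) := by
    rcases le_total (h v) (h w) with hle | hle
    · exact mem_uIcc.2 (.inl ⟨by linarith, by linarith⟩)
    · exact mem_uIcc.2 (.inr ⟨by linarith, by linarith⟩)
  have := sub_ne_zero.2 hvw.symm
  rw [H _ hmem]
  field_simp
  ring

end ReebDrawing

/-! ### Signs and powers -/

section Signs

variable {s s' : ℤˣ} {a b y z : ℝ}

theorem units_cast_injective : Function.Injective fun s : ℤˣ => (s : ℝ) :=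
  Int.cast_injective.comp Units.val_injective

theorem units_cast_mul_self (s : ℤˣ) : (s : ℝ) * s = 1 := by
  rcases Int.units_eq_one_or s with rfl | rfl <;> simp

theorem units_cast_mul_cancel_left (s : ℤˣ) (a : ℝ) : s * (s * a) = a := by
  rw [← mul_assoc, units_cast_mul_self, one_mul]

theorem abs_units_cast (s : ℤˣ) : |(s : ℝ)| = 1 := by
  rcases Int.units_eq_one_or s with rfl | rfl <;> simp

theorem abs_units_cast_mul (s : ℤˣ) (a : ℝ) : |s * a| = |a| := by
  rw [abs_mul, abs_units_cast, one_mul]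

theorem units_cast_mul_eq_iff : s * a = b ↔ a = s * b :=
  ⟨fun h => by rw [← h, units_cast_mul_cancel_left],
    fun h => by rw [h, units_cast_mul_cancel_left]⟩

theorem units_cast_mul_inj (ha : 0 < a) (hb : 0 ≤ b) (hab : s * a = s' * b) :
    s = s' ∧ a = b := by
  rcases Int.units_eq_one_or s with rfl | rfl <;> rcases Int.units_eq_one_or s' with rfl | rfl <;>
    norm_num at hab ⊢ <;> linarith

theorem mem_uIcc_units_cast_mul : y ∈ uIcc (s * a) (s * b) ↔ s * y ∈ uIcc a b := by
  rcases Int.units_eq_one_or s with rfl | rfl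
  · simp
  · simp only [mem_uIcc, Units.val_neg, Units.val_one, Int.cast_neg, Int.cast_one, neg_one_mul,
      neg_le, le_neg]
    tauto

theorem abs_pow_sub_pow_le_mul (hy : |y| ≤ 1) (hz : |z| ≤ 1) (n : ℕ) :
    |y ^ n - z ^ n| ≤ n * |y - z| :=
  calc |y ^ n - z ^ n| ≤ |y - z| * n * max |y| |z| ^ (n - 1) := abs_pow_sub_pow_le y z n
    _ ≤ |y - z| * n * 1 := by gcongr; exact pow_le_one₀ (by positivity) (max_le hy hz)
    _ = n * |y - z| := by ring

end Signs

/-! ### The Reeb graph -/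

/-- Vertices of the example. The sign `s` tells the two fans apart: `s = 1` is the one with corners
at height `1`. The sign `i` says whether a vertex lies right or left in `DoubleFan.drawing`, and `k`
numbers three parallel spokes. -/
inductive DoubleFan : Type
  | apex (s : ℤˣ)
  | corner (s i : ℤˣ)
  | joint (s i : ℤˣ) (k : Fin 3)
  | hub
  deriving Fintype

namespace DoubleFan

/-- The two halves of the `k`-th spoke from the corner `s, i` to the hub. -/
inductive Spoke (s i : ℤˣ) (k : Fin 3) : DoubleFan → DoubleFan → Prop
  | outer : Spoke s i k (corner s i) (joint s i k)
  | inner : Spoke s i k (joint s i k) hub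

/-- The oriented edges of the example: a fan of two long edges from each apex, and the spokes. -/
inductive Arc : DoubleFan → DoubleFan → Prop
  | long (s i : ℤˣ) : Arc (apex s) (corner s i)
  | spoke {s i : ℤˣ} {k : Fin 3} {v w : DoubleFan} (h : Spoke s i k v w) : Arc v w

/-- The underlying graph of the example. -/
def graph : SimpleGraph DoubleFan := SimpleGraph.fromRel Arc

/-- The height function of the example. The long edges at `apex s` end at height `s` and have their
midpoint at height `-s`, the height of the corners of the other fan. -/
noncomputable def height : DoubleFan → ℝ
  | apex s => s * (-3)
  | corner s _ => s
  | joint s _ _ => s * (1 / 2)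
  | hub => 0

variable {s s' i i' : ℤˣ} {k k' : Fin 3} {v w v' w' : DoubleFan} {y z : ℝ}

theorem Arc.ne (h : Arc v w) : v ≠ w := by
  rcases h with _ | ⟨_ | _⟩ <;> simp

theorem Arc.adj (h : Arc v w) : graph.Adj v w := ⟨h.ne, .inl h⟩

theorem adj_long (s i : ℤˣ) : graph.Adj (apex s) (corner s i) := (Arc.long s i).adj

theorem Spoke.adj (h : Spoke s i k v w) : graph.Adj v w := (Arc.spoke h).adj

theorem mem_uIcc_height_long :
    y ∈ uIcc (height (apex s)) (height (corner s i)) ↔ s * y ∈ Icc (-3) 1 := by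
  rw [← uIcc_of_le (by norm_num), ← mem_uIcc_units_cast_mul, mul_one, height, height]

theorem mem_uIcc_height_outer :
    y ∈ uIcc (height (corner s i)) (height (joint s i k)) ↔ s * y ∈ Icc (1 / 2) 1 := by
  rw [← uIcc_of_ge (by norm_num), ← mem_uIcc_units_cast_mul, mul_one, height, height]

theorem mem_uIcc_height_inner :
    y ∈ uIcc (height (joint s i k)) (height hub) ↔ s * y ∈ Icc 0 (1 / 2) := by
  rw [← uIcc_of_ge (by norm_num), ← mem_uIcc_units_cast_mul, mul_zero, height, height]

/-! ### Straight-line drawings -/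

/-- The walk between two corners along the `k`-th spokes. -/
def spokeWalk (s i s' i' : ℤˣ) (k : Fin 3) : graph.Walk (corner s i) (corner s' i') :=
  .cons (Spoke.outer (s := s) (i := i) (k := k)).adj <| .cons Spoke.inner.adj <|
    .cons (Spoke.inner (s := s') (i := i') (k := k)).adj.symm <| .cons Spoke.outer.adj.symm .nil

theorem disjoint_edges_spokeWalk (hk : k ≠ k') :
    (spokeWalk s i s' i' k).edges.Disjoint (spokeWalk s i s' i' k').edges := by
  simp [spokeWalk, hk.symm]

theorem spokeWalk_support_mem_uIcc {t j : ℤˣ} {u : DoubleFan}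
    (hu : u ∈ (spokeWalk s i s' i' k).support) :
    height u ∈ uIcc (height (apex t)) (height (corner t j)) := by
  rw [mem_uIcc_height_long]
  simp only [spokeWalk, SimpleGraph.Walk.support_cons, SimpleGraph.Walk.support_nil,
    List.mem_cons, List.not_mem_nil, or_false] at hu
  rcases Int.units_eq_one_or s with rfl | rfl <;> rcases Int.units_eq_one_or s' with rfl | rfl <;>
    rcases Int.units_eq_one_or t with rfl | rfl <;>
    rcases hu with rfl | rfl | rfl | rfl | rfl <;> norm_num [height]

/-- Here `τ s` indexes the right corner at height `s`, so `τ s * i` indexes the one on side `i`. -/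
theorem three_le_numCrossings_of_passes_inside (D : ReebDrawing graph height) {τ : ℤˣ → ℤˣ}
    (hτ : ∀ s, D.x (corner s (-τ s)) < D.x (corner s (τ s)))
    (hi : i * (D.curve s(apex s, corner s (τ s * i)) (-s) - D.x (corner (-s) (τ (-s) * i))) ≤ 0) :
    3 ≤ D.numCrossings := by
  have hend : 0 < i * (D.curve s(apex s, corner s (τ s * i)) s - D.x (corner s (-(τ s * i)))) := by
    have hx := D.curve_height (adj_long s (τ s * i)) (Sym2.mem_mk_right _ _)
    rw [height] at hx
    rw [hx]
    rcases Int.units_eq_one_or i with rfl | rfl <;> simpa using hτ s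
  refine D.card_le_numCrossings_of_walks (adj_long s (τ s * i))
    (spokeWalk (-s) (τ (-s) * i) s (-(τ s * i))) (fun _ _ => disjoint_edges_spokeWalk)
    (fun k u hu => ⟨spokeWalk_support_mem_uIcc hu, ?_⟩) (σ := i) ?_ ?_
  · simp only [spokeWalk, SimpleGraph.Walk.support_cons, SimpleGraph.Walk.support_nil,
      List.mem_cons, List.not_mem_nil, or_false] at hu
    rcases hu with rfl | rfl | rfl | rfl | rfl <;> simp [neg_units_ne_self]
  · simpa [height] using hi
  · simpa [height] using hend

theorem exists_sub_nonpos_of_midpoint (A : ℤˣ → ℝ) (P : ℤˣ → ℤˣ → ℝ) (hP : ∀ s, P s (-1) < P s 1) :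
    ∃ s i : ℤˣ, i * ((A s + P s i) / 2 - P (-s) i) ≤ 0 := by
  by_contra! h
  have hright : P (-1) 1 < (A 1 + P 1 1) / 2 := by simpa using h 1 1
  have hleft : (A 1 + P 1 (-1)) / 2 < P (-1) (-1) := by simpa using h 1 (-1)
  have hright' : P 1 1 < (A (-1) + P (-1) 1) / 2 := by simpa using h (-1) 1
  have hleft' : (A (-1) + P (-1) (-1)) / 2 < P 1 (-1) := by simpa using h (-1) (-1)
  linarith [hP 1, hP (-1)]

theorem exists_corner_lt (D : ReebDrawing graph height) (s : ℤˣ) :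
    ∃ i, D.x (corner s (-i)) < D.x (corner s i) := by
  have hne : D.x (corner s (-1)) ≠ D.x (corner s 1) := fun he => by
    simpa using D.inj (Prod.ext he rfl : (_, height (corner s (-1))) = (_, height (corner s 1)))
  rcases hne.lt_or_gt with hlt | hlt
  · exact ⟨1, hlt⟩
  · exact ⟨-1, by rwa [neg_neg]⟩

theorem three_le_numCrossings_of_straight (D : ReebDrawing graph height)
    (hD : ∀ s i, D.Straight (apex s) (corner s i)) : 3 ≤ D.numCrossings := by
  choose τ hτ using exists_corner_lt D
  have hmid (s i : ℤˣ) :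
      D.curve s(apex s, corner s i) (-s) = (D.x (apex s) + D.x (corner s i)) / 2 := by
    have hne : height (apex s) ≠ height (corner s i) := by
      rcases Int.units_eq_one_or s with rfl | rfl <;> norm_num [height]
    rw [← (hD s i).curve_midpoint hne, height, height]
    congr 1
    ring
  obtain ⟨s, i, hi⟩ := exists_sub_nonpos_of_midpoint (fun s => D.x (apex s))
    (fun s i => D.x (corner s (τ s * i))) (by simpa using hτ)
  exact three_le_numCrossings_of_passes_inside D hτ (by rwa [hmid])

/-! ### The curved drawing -/

/-- The profile of the long edges of `DoubleFan.drawing`. It is at least `1` on `[-1, 1]`, so that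
both fans enclose the spokes there. -/
noncomputable def bow (t : ℝ) : ℝ := (t + 3) * (2 - t) / 4

theorem bow_pos (hy : y ∈ Ioc (-3) 1) : 0 < bow y := by
  rw [bow]
  nlinarith [hy.1, hy.2]

theorem one_le_bow (hy : y ∈ Icc (-1) 1) : 1 ≤ bow y := by
  rw [bow]
  nlinarith [hy.1, hy.2]

theorem eq_one_of_bow_le_one (hy : y ∈ Icc (-1) 1) (hbow : bow y ≤ 1) : y = 1 := by
  rw [bow] at hbow
  nlinarith [hy.1, hy.2]

/-- The `x`-coordinates of the vertices of `DoubleFan.drawing`. -/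
noncomputable def xCoord : DoubleFan → ℝ
  | apex s => 4 * (s * (-3))
  | corner s i => 4 * s + i
  | joint s i k => 4 * (s * (1 / 2)) + i * (1 / 2) ^ (k.val + 1)
  | hub => 0

/-- The curves of `DoubleFan.drawing`. The summand `4 * y` is a shear, which does not affect
crossings and dominates the slope of the other summand. -/
noncomputable def curveFun : DoubleFan → DoubleFan → ℝ → ℝ
  | apex s, corner _ i, y | corner _ i, apex s, y => 4 * y + i * bow (s * y)
  | corner _ _, joint s i k, y | joint s i k, corner _ _, y
  | hub, joint s i k, y | joint s i k, hub, y => 4 * y + i * (s * y) ^ (k.val + 1)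
  | _, _, _ => 0

theorem curveFun_comm (v w : DoubleFan) : curveFun v w = curveFun w v := by
  cases v <;> cases w <;> rfl

theorem continuous_curveFun (v w : DoubleFan) : Continuous (curveFun v w) := by
  cases v <;> cases w <;> unfold curveFun <;> (try unfold bow) <;> fun_prop

theorem curveFun_height_left (h : graph.Adj v w) : curveFun v w (height v) = xCoord v := by
  rcases h.2 with (⟨s, i⟩ | ⟨_ | _⟩) | (⟨s, i⟩ | ⟨_ | _⟩) <;>
    norm_num [curveFun, height, xCoord, bow, units_cast_mul_self, units_cast_mul_cancel_left]

theorem injective_xCoord_height : Function.Injective fun v => (xCoord v, height v) := by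
  intro v w h
  obtain ⟨hx, hh⟩ := Prod.mk.inj h
  have habs := congrArg abs hh
  rcases v with s | ⟨s, i⟩ | ⟨s, i, k⟩ | _ <;> rcases w with s' | ⟨s', i'⟩ | ⟨s', i', k'⟩ | _ <;>
    try (norm_num [height, abs_units_cast, abs_units_cast_mul] at habs; done)
  · rw [units_cast_injective (mul_right_cancel₀ (by norm_num) hh)]
  · simp only [xCoord, height] at hx hh
    have hi : (i : ℝ) = i' := by linarith
    rw [units_cast_injective hh, units_cast_injective hi]
  · simp only [xCoord, height] at hx hh
    obtain ⟨rfl, hk⟩ := units_cast_mul_inj (s := i) (s' := i')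
      (a := (1 / 2) ^ (k.val + 1)) (b := (1 / 2) ^ (k'.val + 1))
      (by positivity) (by positivity) (by linarith)
    have hkk' := (pow_right_inj₀ (by norm_num) (by norm_num)).1 hk
    rw [units_cast_injective (mul_right_cancel₀ (by norm_num) hh),
      Fin.ext (Nat.succ_injective hkk')]
  · rfl

/-- A drawing in which each long edge runs outside all spokes. -/
noncomputable def drawing : ReebDrawing graph height where
  x := xCoord
  inj := injective_xCoord_height
  curve := Sym2.lift ⟨curveFun, curveFun_comm⟩
  curve_cont e _ := e.ind continuous_curveFun
  curve_end _ _ := curveFun_height_left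

theorem drawing_curve (v w : DoubleFan) : drawing.curve s(v, w) = curveFun v w := rfl

theorem injOn_curveFun_long :
    InjOn (curveFun (apex s) (corner s i)) (uIcc (height (apex s)) (height (corner s i))) := by
  intro y hy z hz hyz
  obtain ⟨hy₁, hy₂⟩ := mem_uIcc_height_long.1 hy
  obtain ⟨hz₁, hz₂⟩ := mem_uIcc_height_long.1 hz
  have hfactor : (y - z) * (16 - i * (s * (1 + (s * y + s * z)))) = 0 := by
    simp only [curveFun, bow] at hyz
    linear_combination 4 * hyz
  have hbound : |i * (s * (1 + (s * y + s * z)))| ≤ 5 := by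
    rw [abs_units_cast_mul, abs_units_cast_mul, abs_le]
    constructor <;> linarith
  exact sub_eq_zero.1 ((mul_eq_zero.1 hfactor).resolve_right fun h => by
    linarith [le_of_abs_le hbound])

theorem Spoke.curveFun_eq (h : Spoke s i k v w) :
    curveFun v w y = 4 * y + i * (s * y) ^ (k.val + 1) := by
  rcases h with _ | _ <;> rfl

theorem Spoke.units_cast_mul_mem_Icc (h : Spoke s i k v w) (hy : y ∈ uIcc (height v) (height w)) :
    s * y ∈ Icc 0 1 := by
  rcases h with _ | _
  · exact Icc_subset_Icc_left (by norm_num) (mem_uIcc_height_outer.1 hy)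
  · exact Icc_subset_Icc_right (by norm_num) (mem_uIcc_height_inner.1 hy)

theorem Spoke.injOn_curveFun (h : Spoke s i k v w) :
    InjOn (curveFun v w) (uIcc (height v) (height w)) := by
  intro y hy z hz hyz
  rw [h.curveFun_eq, h.curveFun_eq] at hyz
  have habs_le {t : ℝ} (ht : t ∈ Icc 0 1) : |t| ≤ 1 := (abs_of_nonneg ht.1).trans_le ht.2
  have hpow := abs_pow_sub_pow_le_mul (habs_le (h.units_cast_mul_mem_Icc hy))
    (habs_le (h.units_cast_mul_mem_Icc hz)) (k.val + 1)
  have hk : ((k.val + 1 : ℕ) : ℝ) ≤ 3 := by exact_mod_cast k.isLt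
  have habs : |(s * y) ^ (k.val + 1) - (s * z) ^ (k.val + 1)| = 4 * |y - z| := by
    rw [← abs_units_cast_mul i, mul_sub,
      show i * (s * y) ^ (k.val + 1) - i * (s * z) ^ (k.val + 1) = -(4 * (y - z)) by linarith,
      abs_neg, abs_mul, abs_of_pos four_pos]
  rw [← mul_sub, abs_units_cast_mul, habs] at hpow
  have := mul_le_mul_of_nonneg_right hk (abs_nonneg (y - z))
  exact sub_eq_zero.1 (abs_nonpos_iff.1 (by linarith))

theorem xyMonotone_drawing (h : graph.Adj v w) : drawing.XYMonotone v w := by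
  have harc {v w : DoubleFan} (h : Arc v w) :
      InjOn (curveFun v w) (uIcc (height v) (height w)) := by
    rcases h with _ | h
    · exact injOn_curveFun_long
    · exact h.injOn_curveFun
  rcases h.2 with h | h
  · exact harc h
  · rw [ReebDrawing.XYMonotone, uIcc_comm, Sym2.eq_swap]
    exact harc h

/-! ### The crossings of the curved drawing -/

variable {p : ℝ × ℝ}

theorem Spoke.hub_mem (h : Spoke s i k v w) (hy : (0 : ℝ) ∈ uIcc (height v) (height w)) :
    hub ∈ s(v, w) := by
  rcases h with _ | _
  · have := (mem_uIcc_height_outer.1 hy).1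
    norm_num at this
  · exact Sym2.mem_mk_right _ _

theorem Spoke.corner_mem (h : Spoke s i k v w) (hy : (s : ℝ) ∈ uIcc (height v) (height w)) :
    corner s i ∈ s(v, w) := by
  rcases h with _ | _
  · exact Sym2.mem_mk_left _ _
  · have := (mem_uIcc_height_inner.1 hy).2
    norm_num [units_cast_mul_self] at this

theorem Spoke.eq_or_height_joint (h : Spoke s i k v w) (h' : Spoke s i k v' w')
    (hy : y ∈ uIcc (height v) (height w)) (hy' : y ∈ uIcc (height v') (height w')) :
    s(v, w) = s(v', w') ∨ y = height (joint s i k) ∧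
      joint s i k ∈ s(v, w) ∧ joint s i k ∈ s(v', w') := by
  have height_joint {y : ℝ} (hy : s * y ∈ Icc (1 / 2) 1) (hy' : s * y ∈ Icc 0 (1 / 2)) :
      y = height (joint s i k) :=
    units_cast_mul_eq_iff.1 (le_antisymm hy'.2 hy.1)
  rcases h with _ | _ <;> rcases h' with _ | _
  · exact .inl rfl
  · exact .inr ⟨height_joint (mem_uIcc_height_outer.1 hy) (mem_uIcc_height_inner.1 hy'),
      Sym2.mem_mk_right _ _, Sym2.mem_mk_left _ _⟩
  · exact .inr ⟨height_joint (mem_uIcc_height_outer.1 hy') (mem_uIcc_height_inner.1 hy),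
      Sym2.mem_mk_left _ _, Sym2.mem_mk_right _ _⟩
  · exact .inl rfl

theorem not_isCrossing_spoke_spoke (h : Spoke s i k v w) (h' : Spoke s' i' k' v' w') :
    ¬ drawing.IsCrossing p v w v' w' := by
  intro H
  obtain ⟨-, -, hne, ⟨hp, hpx⟩, ⟨hp', hpx'⟩, -⟩ := id H
  have hy := h.units_cast_mul_mem_Icc hp
  have hy' := h'.units_cast_mul_mem_Icc hp'
  rw [drawing_curve, h.curveFun_eq] at hpx
  rw [drawing_curve, h'.curveFun_eq] at hpx'
  have hpow : i * (s * p.2) ^ (k.val + 1) = i' * (s' * p.2) ^ (k'.val + 1) := by linarith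
  have hy_ne : p.2 ≠ 0 := fun h0 =>
    H.snd_ne_height (h.hub_mem (h0 ▸ hp)) (h'.hub_mem (h0 ▸ hp')) h0
  have hy_pos : 0 < s * p.2 := hy.1.lt_of_ne' (by simpa using hy_ne)
  obtain ⟨rfl, -⟩ := units_cast_mul_inj hy_pos hy'.1
    ((units_cast_mul_cancel_left s p.2).trans (units_cast_mul_cancel_left s' p.2).symm)
  obtain ⟨rfl, hpow_eq⟩ := units_cast_mul_inj (pow_pos hy_pos _) (pow_nonneg hy'.1 _) hpow
  have hy_ne_one : s * p.2 ≠ 1 := fun h1 => by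
    have hps : p.2 = s := by rw [units_cast_mul_eq_iff.1 h1, mul_one]
    exact H.snd_ne_height (h.corner_mem (hps ▸ hp)) (h'.corner_mem (hps ▸ hp')) hps
  obtain rfl : k = k' :=
    Fin.ext (Nat.succ_injective ((pow_right_inj₀ hy_pos hy_ne_one).1 hpow_eq))
  rcases h.eq_or_height_joint h' hp hp' with he | ⟨hpj, hj, hj'⟩
  · exact hne he
  · exact H.snd_ne_height hj hj' hpj

theorem not_isCrossing_long_spoke (h : Spoke s' i' k v w) :
    ¬ drawing.IsCrossing p (apex s) (corner s i) v w := by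
  intro H
  obtain ⟨-, -, -, ⟨-, hpx⟩, ⟨hp', hpx'⟩, -⟩ := id H
  have hy' := h.units_cast_mul_mem_Icc hp'
  have hy : s * p.2 ∈ Icc (-1) 1 := by
    rw [mem_Icc, ← abs_le, abs_units_cast_mul, ← abs_units_cast_mul s', abs_le]
    exact ⟨by linarith [hy'.1], hy'.2⟩
  rw [drawing_curve, h.curveFun_eq] at hpx'
  rw [drawing_curve, curveFun] at hpx
  have hbow := one_le_bow hy
  obtain ⟨rfl, hpow⟩ := units_cast_mul_inj (s := i) (s' := i') (zero_lt_one.trans_le hbow)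
    (pow_nonneg hy'.1 (k.val + 1)) (by linarith)
  have hs : s * p.2 = 1 := eq_one_of_bow_le_one hy (hpow ▸ pow_le_one₀ hy'.1 hy'.2)
  have hps : p.2 = s := by rw [units_cast_mul_eq_iff.1 hs, mul_one]
  obtain ⟨rfl, -⟩ := units_cast_mul_inj (s := s) (s' := s') (hs ▸ one_pos) hy'.1
    ((units_cast_mul_cancel_left s p.2).trans (units_cast_mul_cancel_left s' p.2).symm)
  exact H.snd_ne_height (Sym2.mem_mk_right _ _) (h.corner_mem (hps ▸ hp')) hps

theorem eq_of_isCrossing_long_long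
    (H : drawing.IsCrossing p (apex s) (corner s i) (apex s') (corner s' i')) :
    s' = -s ∧ i' = i ∧ p = ((i : ℝ) * (3 / 2), 0) := by
  obtain ⟨-, -, hne, ⟨hp, hpx⟩, ⟨hp', hpx'⟩, -⟩ := id H
  rw [mem_uIcc_height_long] at hp hp'
  rw [drawing_curve, curveFun] at hpx hpx'
  have hbow : i * bow (s * p.2) = i' * bow (s' * p.2) := by linarith
  obtain rfl | rfl : s' = s ∨ s' = -s := (em _).imp_right Int.units_ne_iff_eq_neg.1
  · have hy_ne : s' * p.2 ≠ -3 := fun h3 =>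
      H.snd_ne_height (Sym2.mem_mk_left _ _) (Sym2.mem_mk_left _ _) (units_cast_mul_eq_iff.1 h3)
    have hpos := bow_pos ⟨hp.1.lt_of_ne' hy_ne, hp.2⟩
    obtain ⟨rfl, -⟩ := units_cast_mul_inj hpos hpos.le hbow
    exact absurd rfl hne
  · rw [Units.val_neg, Int.cast_neg, neg_mul] at hp' hbow
    have hpos := zero_lt_one.trans_le (one_le_bow ⟨by linarith [hp'.2], hp.2⟩)
    have hpos' := zero_lt_one.trans_le (one_le_bow (y := -(s * p.2)) ⟨by linarith [hp.2], hp'.2⟩)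
    obtain ⟨rfl, hbow_eq⟩ := units_cast_mul_inj hpos hpos'.le hbow
    have hp2 : p.2 = 0 := by
      rw [bow, bow] at hbow_eq
      rw [units_cast_mul_eq_iff.1 (show s * p.2 = 0 by linarith), mul_zero]
    refine ⟨rfl, rfl, Prod.ext ?_ hp2⟩
    rw [hpx, hp2]
    norm_num [bow]

/-- The crossing of the two long edges on the side `i` of `DoubleFan.drawing`. -/
noncomputable def crossing (i : ℤˣ) : Sym2 (Sym2 DoubleFan) × (ℝ × ℝ) :=
  (s(s(apex 1, corner 1 i), s(apex (-1), corner (-1) i)), (i * (3 / 2), 0))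

theorem isCrossing_long_long (i : ℤˣ) :
    drawing.IsCrossing (i * (3 / 2), 0) (apex 1) (corner 1 i) (apex (-1)) (corner (-1) i) := by
  refine ⟨adj_long 1 i, adj_long (-1) i, by simp, ⟨mem_uIcc_height_long.2 (by norm_num), ?_⟩,
    ⟨mem_uIcc_height_long.2 (by norm_num), ?_⟩, ?_⟩
  · norm_num [drawing_curve, curveFun, bow]
  · norm_num [drawing_curve, curveFun, bow]
  · rintro u (rfl | rfl) (hu | hu) <;> simp at hu

theorem injective_crossing : Function.Injective crossing := fun i i' h =>
  units_cast_injective (mul_right_cancel₀ (by norm_num) (congrArg (fun q => q.2.1) h))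

theorem crossingSet_drawing : drawing.crossingSet = range crossing := by
  refine Subset.antisymm (fun q hq => ?_) (range_subset_iff.2 fun i =>
    ⟨_, _, _, _, rfl, isCrossing_long_long i⟩)
  obtain ⟨v, w, v', w', h, h', hq, H⟩ := ReebDrawing.exists_oriented_of_mem_crossingSet hq
  rcases h with ⟨s, i⟩ | h <;> rcases h' with ⟨s', i'⟩ | h'
  · obtain ⟨rfl, rfl, hp⟩ := eq_of_isCrossing_long_long H
    refine ⟨i', Prod.ext ?_ hp.symm⟩
    rcases Int.units_eq_one_or s with rfl | rfl
    · exact hq.symm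
    · rw [hq, neg_neg, Sym2.eq_swap, crossing]
  · exact absurd H (not_isCrossing_long_spoke h')
  · exact absurd H.symm (not_isCrossing_long_spoke h)
  · exact absurd H (not_isCrossing_spoke_spoke h h')

theorem numCrossings_drawing : drawing.numCrossings = 2 := by
  rw [ReebDrawing.numCrossings, crossingSet_drawing, ← image_univ, injective_crossing.encard_image,
    encard_univ, ENat.card_eq_coe_fintype_card, Fintype.card_units_int,
    Nat.cast_ofNat]

end DoubleFan

/-- There exist a Reeb graph `(G, h)`, a natural number `k`, and a
drawing `Γ` of `(G, h)` such that every edge of `Γ` is an `xy`-monotone curve (every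
vertex lies at `y`-coordinate `h v` by definition of a drawing), `Γ` has exactly `k`
crossings, and every drawing of `(G, h)` in which all edges are straight line segments
has strictly more than `k` crossings. -/
theorem exists_nonstretchable_reeb_drawing :
    ∃ (V : Type) (_ : Fintype V) (G : SimpleGraph V) (h : V → ℝ) (k : ℕ)
      (D : ReebDrawing G h),
      (∀ v w : V, G.Adj v w → D.XYMonotone v w) ∧
      D.numCrossings = (k : ℕ∞) ∧
      ∀ D' : ReebDrawing G h, (∀ v w : V, G.Adj v w → D'.Straight v w) →
        (k : ℕ∞) < D'.numCrossings := by
  refine ⟨DoubleFan, inferInstance, DoubleFan.graph, DoubleFan.height, 2, DoubleFan.drawing,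
    fun _ _ => DoubleFan.xyMonotone_drawing, DoubleFan.numCrossings_drawing, fun D' hD' => ?_⟩
  calc ((2 : ℕ) : ℕ∞) < 3 := by norm_num
    _ ≤ D'.numCrossings := DoubleFan.three_le_numCrossings_of_straight D' fun s i =>
        hD' _ _ (DoubleFan.adj_long s i)
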